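/- arXiv:1905.13502 — 2 statements merged into one kernel-verified Lean document; each statement's English description precedes it below -/
import Mathlib

section
/- For all a, b ∈ F∖{0}, the pushforward of μ_a under the homothety λ_b : v ↦ b·v on V = Fⁿ equals ‖b‖^{2−n}·μ_{ab²}; that is, (λ_b)_*(μ_a) = ‖b‖^{2−n}·μ_{ab²} as measures on V∖X₀. (This is Lemma 6.3 of the paper, the homogeneity property of the fiber measures |ω_a| on the hyperboloids X_a.) -/
open MeasureTheory

/-
A Gelfand–Leray family is unique: for `f ∈ C_c(V)` and `φ ∈ C_c(F ∖ {0})` the disintegration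
identity applied to `(φ ∘ q) f` reads `∫ φ(q) f dvol = ∫ φ(a) (∫ f dμ_a) dμF(a)`, and this
determines the continuous function `a ↦ ∫ f dμ_a` on `F ∖ {0}`. The homothety `v ↦ b • v` covers
`a ↦ b ^ 2 * a`, so it carries a Gelfand–Leray family for `(vol, μF)` to one for the two image
measures. These are multiples of `vol` and `μF`, so a rescaling of the original family is another,
and the ratio of the two factors is the power of `‖b‖` that appears.
-/

open scoped NNReal ComplexConjugate

section Topology

theorem continuous_mul_of_tsupport_subset {X R : Type*} [TopologicalSpace X] [TopologicalSpace R]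
    [MulZeroClass R] [ContinuousMul R] {U : Set X} {φ g : X → R} (hφ : Continuous φ)
    (hU : IsOpen U) (hφU : tsupport φ ⊆ U) (hg : ContinuousOn g U) :
    Continuous fun x => φ x * g x :=
  (hφ.continuousOn.mul hg).continuous_of_tsupport_subset hU
    (tsupport_mul_subset_left.trans hφU)

theorem mem_tsupport_of_mem_tsupport_comp_mul {X Y R : Type*} [TopologicalSpace X]
    [TopologicalSpace Y] [MulZeroClass R] {q : X → Y} (hq : Continuous q) {φ : Y → R} {f : X → R}
    {x : X} (hx : x ∈ tsupport fun x => φ (q x) * f x) : q x ∈ tsupport φ :=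
  tsupport_comp_subset_preimage φ hq (tsupport_mul_subset_left hx)

theorem exists_continuous_complex_cutoff {X : Type*} [TopologicalSpace X] [R1Space X]
    [LocallyCompactSpace X] {K U : Set X} (hK : IsCompact K) (hU : IsOpen U) (hKU : K ⊆ U) :
    ∃ ψ : X → ℂ, Continuous ψ ∧ HasCompactSupport ψ ∧ tsupport ψ ⊆ U ∧ Set.EqOn ψ 1 K := by
  obtain ⟨ψ, hψ_one, hψ_compact, hψU, -⟩ :=
    exists_continuousMap_one_of_isCompact_subset_isOpen hK hU hKU
  have htsupport : tsupport (fun x => (ψ x : ℂ)) = tsupport ψ := by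
    simp only [tsupport, Function.support, ne_eq, Complex.ofReal_eq_zero]
  refine ⟨fun x => (ψ x : ℂ), by fun_prop, ?_, htsupport ▸ hψU, fun x hx => ?_⟩
  · rwa [HasCompactSupport, htsupport]
  · simp [hψ_one hx]

theorem continuous_quadraticMap_of_finiteDimensional {𝕜 E : Type*} [NontriviallyNormedField 𝕜]
    [CompleteSpace 𝕜] [AddCommGroup E] [Module 𝕜 E] [FiniteDimensional 𝕜 E] [TopologicalSpace E]
    [IsTopologicalAddGroup E] [ContinuousSMul 𝕜 E] [T2Space E] (q : QuadraticForm 𝕜 E) :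
    Continuous q := by
  obtain ⟨B, rfl⟩ := LinearMap.BilinMap.toQuadraticMap_surjective q
  let e := Module.finBasis 𝕜 E
  have hB (x : E) : ∑ i, e.coord i x * B (e i) x = B.toQuadraticMap x := calc
    _ = B (∑ i, e.repr x i • e i) x := by
      simp only [map_sum, map_smul, LinearMap.sum_apply, LinearMap.smul_apply, smul_eq_mul,
        Module.Basis.coord_apply]
    _ = B.toQuadraticMap x := by rw [e.sum_repr, LinearMap.BilinMap.toQuadraticMap_apply]
  refine Continuous.congr (continuous_finsetSum _ fun i _ => ?_) hB
  exact (LinearMap.continuous_of_finiteDimensional (e.coord i)).mul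
    (LinearMap.continuous_of_finiteDimensional (B (e i)))

end Topology

section Uniqueness

variable {X : Type*} [TopologicalSpace X] [MeasurableSpace X] [BorelSpace X] {ν : Measure X}
  [IsFiniteMeasureOnCompacts ν]

theorem eq_zero_of_integral_norm_sq_eq_zero [ν.IsOpenPosMeasure] {χ : X → ℂ} (hχ : Continuous χ)
    (hχ_compact : HasCompactSupport χ) (hzero : ∫ x, ‖χ x‖ ^ 2 ∂ν = 0) : χ = 0 := by
  by_contra hne
  obtain ⟨a, ha⟩ := Function.ne_iff.1 hne
  have hsq_compact : HasCompactSupport fun x => ‖χ x‖ ^ 2 :=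
    hχ_compact.comp_left (g := fun z : ℂ => ‖z‖ ^ 2) (by simp)
  exact ((hχ.norm.pow 2).integral_pos_of_hasCompactSupport_nonneg_nonzero hsq_compact
    (fun x => sq_nonneg ‖χ x‖) (pow_ne_zero 2 (norm_ne_zero_iff.2 ha))).ne' hzero

theorem eqOn_zero_of_forall_setIntegral_mul_eq_zero [R1Space X] [LocallyCompactSpace X]
    [ν.IsOpenPosMeasure] {U : Set X} (hU : IsOpen U) {g : X → ℂ} (hg : ContinuousOn g U)
    (hφg : ∀ φ : X → ℂ, Continuous φ → HasCompactSupport φ → tsupport φ ⊆ U →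
      ∫ x in U, φ x * g x ∂ν = 0) :
    Set.EqOn g 0 U := by
  intro a ha
  obtain ⟨ψ, hψ, hψ_compact, hψU, hψ_one⟩ :=
    exists_continuous_complex_cutoff isCompact_singleton hU (Set.singleton_subset_iff.2 ha)
  have hψg : Continuous fun x => ψ x * g x := continuous_mul_of_tsupport_subset hψ hU hψU hg
  have hψg_compact : HasCompactSupport fun x => ψ x * g x := hψ_compact.mul_right
  have hnorm_sq (x : X) : ψ x * conj (ψ x * g x) * g x = ((‖ψ x * g x‖ ^ 2 : ℝ) : ℂ) := by
    rw [Complex.ofReal_pow, ← Complex.conj_mul' (ψ x * g x)]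
    ring
  have hzero : ∫ x in U, ‖ψ x * g x‖ ^ 2 ∂ν = 0 := by
    have hφ_zero := hφg (fun x => ψ x * conj (ψ x * g x))
      (hψ.mul (Complex.continuous_conj.comp hψg)) hψ_compact.mul_right
      (tsupport_mul_subset_left.trans hψU)
    simp only [hnorm_sq] at hφ_zero
    rwa [integral_complex_ofReal, Complex.ofReal_eq_zero] at hφ_zero
  have hψ_zero (x : X) (hx : x ∉ U) : ‖ψ x * g x‖ ^ 2 = 0 := by
    simp [image_eq_zero_of_notMem_tsupport fun hxψ => hx (hψU hxψ)]
  rw [setIntegral_eq_integral_of_forall_compl_eq_zero hψ_zero] at hzero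
  have hψg_zero := congrFun (eq_zero_of_integral_norm_sq_eq_zero hψg hψg_compact hzero) a
  simpa only [hψ_one (Set.mem_singleton a), Pi.one_apply, one_mul] using hψg_zero

theorem eqOn_of_forall_setIntegral_mul_eq [R1Space X] [LocallyCompactSpace X]
    [ν.IsOpenPosMeasure] {U : Set X} (hU : IsOpen U) {g h : X → ℂ}
    (hg : ContinuousOn g U) (hh : ContinuousOn h U)
    (hgh : ∀ φ : X → ℂ, Continuous φ → HasCompactSupport φ → tsupport φ ⊆ U →
      ∫ x in U, φ x * g x ∂ν = ∫ x in U, φ x * h x ∂ν) :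
    Set.EqOn g h U := by
  have hsub : Set.EqOn (g - h) 0 U := by
    refine eqOn_zero_of_forall_setIntegral_mul_eq_zero (ν := ν) hU (hg.sub hh)
      fun φ hφ hφ_compact hφU => ?_
    have integrable {k : X → ℂ} (hk : ContinuousOn k U) :
        IntegrableOn (fun x => φ x * k x) U ν :=
      ((continuous_mul_of_tsupport_subset hφ hU hφU hk).integrable_of_hasCompactSupport
        hφ_compact.mul_right).integrableOn
    simp only [Pi.sub_apply, mul_sub]
    rw [integral_sub (integrable hg) (integrable hh), hgh φ hφ hφ_compact hφU, sub_self]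
  exact fun x hx => sub_eq_zero.1 (hsub hx)

end Uniqueness

/-- `μ` is a Gelfand–Leray family for `q : V → F`: it disintegrates `vol` along the fibres of `q`
over `F ∖ {0}`, with base measure `μF`. Test functions are the elements of `C_c(V)` whose support
misses the null cone `q = 0`; `μ 0` is a junk value. Compact support of `a ↦ ∫ f ∂μ a` in
`F ∖ {0}` is not a field: for continuous `q` these integrals vanish off `q '' tsupport f`. -/
structure IsGelfandLeray {F V : Type*} [TopologicalSpace F] [Zero F] [MeasurableSpace F]
    [TopologicalSpace V] [MeasurableSpace V] (q : V → F) (vol : Measure V) (μF : Measure F)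
    (μ : F → Measure V) : Prop where
  regular : ∀ a, a ≠ 0 → (μ a).Regular
  measure_ne_eq_zero : ∀ a, a ≠ 0 → μ a {v | q v ≠ a} = 0
  continuousOn_integral : ∀ f : V → ℂ, Continuous f → HasCompactSupport f →
    (∀ v ∈ tsupport f, q v ≠ 0) → ContinuousOn (fun a => ∫ v, f v ∂μ a) {a | a ≠ 0}
  integral_eq : ∀ f : V → ℂ, Continuous f → HasCompactSupport f → (∀ v ∈ tsupport f, q v ≠ 0) →
    ∫ v, f v ∂vol = ∫ a in {a | a ≠ 0}, ∫ v, f v ∂μ a ∂μF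

namespace IsGelfandLeray

section Basic

variable {F V : Type*} [TopologicalSpace F] [Zero F] [MeasurableSpace F]
  [TopologicalSpace V] [MeasurableSpace V] {q : V → F} {vol : Measure V} {μF : Measure F}
  {μ : F → Measure V}

theorem integral_comp_mul (hμ : IsGelfandLeray q vol μF μ) {a : F} (ha : a ≠ 0) (φ : F → ℂ)
    (f : V → ℂ) : ∫ v, φ (q v) * f v ∂μ a = φ a * ∫ v, f v ∂μ a := by
  have hq : ∀ᵐ v ∂μ a, q v = a := hμ.measure_ne_eq_zero a ha
  rw [← integral_const_mul]
  exact integral_congr_ae (hq.mono fun v hv => congrArg (φ · * f v) hv)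

theorem continuousOn_integral_of_hasCompactSupport [T2Space F] [LocallyCompactSpace F]
    (hμ : IsGelfandLeray q vol μF μ) (hq : Continuous q)
    {f : V → ℂ} (hf : Continuous f) (hfc : HasCompactSupport f) :
    ContinuousOn (fun a => ∫ v, f v ∂μ a) {a | a ≠ 0} := by
  intro a ha
  obtain ⟨K, hK, haK, hK0⟩ := exists_compact_subset isOpen_ne ha
  obtain ⟨ψ, hψ, -, hψ0, hψ_one⟩ := exists_continuous_complex_cutoff hK isOpen_ne hK0
  have hcont := hμ.continuousOn_integral (fun v => ψ (q v) * f v) ((hψ.comp hq).mul hf)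
    hfc.mul_left (fun v hv => hψ0 (mem_tsupport_of_mem_tsupport_comp_mul hq hv)) a ha
  refine hcont.congr_of_eventuallyEq_of_mem (Filter.EventuallyEq.symm ?_) ha
  filter_upwards [self_mem_nhdsWithin, mem_nhdsWithin_of_mem_nhds (mem_interior_iff_mem_nhds.1 haK)]
    with x hx hxK
  rw [hμ.integral_comp_mul hx, hψ_one hxK, Pi.one_apply, one_mul]

theorem integral_comp_mul_eq [OpensMeasurableSpace F] [T1Space F]
    (hμ : IsGelfandLeray q vol μF μ) (hq : Continuous q) {φ : F → ℂ}
    (hφ : Continuous φ) (hφ0 : tsupport φ ⊆ {a | a ≠ 0}) {f : V → ℂ} (hf : Continuous f)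
    (hfc : HasCompactSupport f) :
    ∫ v, φ (q v) * f v ∂vol = ∫ a in {a | a ≠ 0}, φ a * ∫ v, f v ∂μ a ∂μF := by
  rw [hμ.integral_eq (fun v => φ (q v) * f v) ((hφ.comp hq).mul hf) hfc.mul_left
    fun v hv => hφ0 (mem_tsupport_of_mem_tsupport_comp_mul hq hv)]
  exact setIntegral_congr_fun isOpen_ne.measurableSet fun a ha => hμ.integral_comp_mul ha φ f

theorem smul (hμ : IsGelfandLeray q vol μF μ) (c : ℝ≥0) {d : ℝ≥0} (hd : d ≠ 0) :
    IsGelfandLeray q (c • vol) (d • μF) fun a => (c / d) • μ a where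
  regular a ha := by
    have := hμ.regular a ha
    infer_instance
  measure_ne_eq_zero a ha := by simp [hμ.measure_ne_eq_zero a ha]
  continuousOn_integral f hf hfc hf0 := by
    simp only [integral_smul_nnreal_measure]
    exact (hμ.continuousOn_integral f hf hfc hf0).const_smul (c / d)
  integral_eq f hf hfc hf0 := by
    simp only [Measure.restrict_smul, integral_smul_nnreal_measure, hμ.integral_eq f hf hfc hf0]
    simp only [NNReal.smul_def, integral_smul, smul_smul, ← NNReal.coe_mul, mul_div_cancel₀ c hd]

end Basic

variable {F F' V V' : Type*} [TopologicalSpace F] [MeasurableSpace F] [BorelSpace F] [Zero F]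
  [TopologicalSpace F'] [MeasurableSpace F'] [BorelSpace F'] [Zero F']
  [TopologicalSpace V] [MeasurableSpace V] [BorelSpace V]
  [TopologicalSpace V'] [MeasurableSpace V'] [BorelSpace V']
  {q : V → F} {vol : Measure V} {μF : Measure F} {μ μ' : F → Measure V}

theorem map (hμ : IsGelfandLeray q vol μF μ) (T : V ≃ₜ V') (S : F ≃ₜ F') (hS : S 0 = 0)
    {q' : V' → F'} (hq : ∀ v, q' (T v) = S (q v)) :
    IsGelfandLeray q' (vol.map T) (μF.map S) fun a => (μ (S.symm a)).map T := by
  have hsymm {a : F'} (ha : a ≠ 0) : S.symm a ≠ 0 := fun h =>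
    ha (by rw [← S.apply_symm_apply a, h, hS])
  have htest {f : V' → ℂ} (hf0 : ∀ v ∈ tsupport f, q' v ≠ 0) : ∀ v ∈ tsupport (f ∘ T), q v ≠ 0 :=
    fun v hv h => hf0 (T v) (tsupport_comp_subset_preimage f T.continuous hv) (by rw [hq, h, hS])
  exact {
    regular := fun a ha => by
      have := hμ.regular _ (hsymm ha)
      exact Measure.Regular.map T
    measure_ne_eq_zero := fun a ha => by
      have hpre : T ⁻¹' {v | q' v ≠ a} = {v | q v ≠ S.symm a} := by
        ext v
        simp [hq, S.eq_symm_apply]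
      rw [T.measurableEmbedding.map_apply, hpre, hμ.measure_ne_eq_zero _ (hsymm ha)]
    continuousOn_integral := fun f hf hfc hf0 => by
      simp only [T.measurableEmbedding.integral_map]
      exact (hμ.continuousOn_integral (f ∘ T) (hf.comp T.continuous) (hfc.comp_homeomorph T)
        (htest hf0)).comp S.symm.continuous.continuousOn fun a ha => hsymm ha
    integral_eq := fun f hf hfc hf0 => by
      have hpre : S ⁻¹' {a | a ≠ 0} = {a | a ≠ 0} := by
        ext a
        simp [← hS]
      simp only [S.measurableEmbedding.setIntegral_map, T.measurableEmbedding.integral_map, hpre,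
        S.symm_apply_apply]
      exact hμ.integral_eq (f ∘ T) (hf.comp T.continuous) (hfc.comp_homeomorph T) (htest hf0) }

theorem eq_of_ne_zero [T2Space F] [LocallyCompactSpace F] [T2Space V] [LocallyCompactSpace V]
    [μF.IsOpenPosMeasure] [IsFiniteMeasureOnCompacts μF] (hq : Continuous q)
    (hμ : IsGelfandLeray q vol μF μ) (hμ' : IsGelfandLeray q vol μF μ') {a : F} (ha : a ≠ 0) :
    μ a = μ' a := by
  have := hμ.regular a ha
  have := hμ'.regular a ha
  refine Measure.ext_of_integral_eq_on_compactlySupported fun f => ?_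
  have hf : Continuous fun v => (f v : ℂ) := Complex.continuous_ofReal.comp f.continuous
  have hfc : HasCompactSupport fun v => (f v : ℂ) :=
    f.hasCompactSupport.comp_left (g := ((↑) : ℝ → ℂ)) Complex.ofReal_zero
  have hint := eqOn_of_forall_setIntegral_mul_eq (ν := μF) isOpen_ne
    (hμ.continuousOn_integral_of_hasCompactSupport hq hf hfc)
    (hμ'.continuousOn_integral_of_hasCompactSupport hq hf hfc)
    (fun φ hφ _ hφ0 => (hμ.integral_comp_mul_eq hq hφ hφ0 hf hfc).symm.trans
      (hμ'.integral_comp_mul_eq hq hφ hφ0 hf hfc)) ha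
  simpa only [integral_complex_ofReal, Complex.ofReal_inj] using hint

theorem map_eq_smul [T2Space F] [LocallyCompactSpace F] [T2Space V] [LocallyCompactSpace V]
    [μF.IsOpenPosMeasure] [IsFiniteMeasureOnCompacts μF] (hq : Continuous q)
    (hμ : IsGelfandLeray q vol μF μ) (T : V ≃ₜ V) (S : F ≃ₜ F) (hS : S 0 = 0)
    (hqT : ∀ v, q (T v) = S (q v)) {c d : ℝ≥0} (hd : d ≠ 0) (hvol : vol.map T = c • vol)
    (hμF : μF.map S = d • μF) {a : F} (ha : a ≠ 0) :
    (μ a).map T = (c / d) • μ (S a) := by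
  have : (d • μF).IsOpenPosMeasure :=
    Measure.isOpenPosMeasure_smul μF (ENNReal.coe_ne_zero.2 hd)
  have hmap : IsGelfandLeray q (c • vol) (d • μF) fun a => (μ (S.symm a)).map T :=
    hvol ▸ hμF ▸ hμ.map T S hS hqT
  have hSa : S a ≠ 0 := hS ▸ S.injective.ne ha
  simpa only [S.symm_apply_apply] using hmap.eq_of_ne_zero hq (hμ.smul c hd) hSa

end IsGelfandLeray

section Homogeneous

theorem ofReal_norm_rpow {E : Type*} [SeminormedAddGroup E] (x : E) (k : ℝ) :
    ENNReal.ofReal (‖x‖ ^ k) = (‖x‖₊ ^ k : ℝ≥0) := by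
  rw [← coe_nnnorm, ← NNReal.coe_rpow, ENNReal.ofReal_coe_nnreal]

/-- The measure `ν` is homogeneous of degree `k` under the action of the normed field `F`, i.e.
`ν (b • A) = ‖b‖ ^ k * ν A` for `b ≠ 0`; this is stated through the pushforward under `b • ·`,
hence the negative exponent. -/
def IsHomogeneousMeasure (F : Type*) {E : Type*} [NormedField F] [SMul F E] [MeasurableSpace E]
    (k : ℝ) (ν : Measure E) : Prop :=
  ∀ b : F, b ≠ 0 → ν.map (fun x => b • x) = ‖b‖₊ ^ (-k) • ν

namespace IsHomogeneousMeasure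

variable {F : Type*} [NormedField F]

theorem of_measure_image {E : Type*} [MulAction F E] [MeasurableSpace E] [MeasurableConstSMul F E]
    {k : ℝ} {ν : Measure E}
    (hν : ∀ b : F, b ≠ 0 → ∀ A : Set E, MeasurableSet A →
      ν ((fun x => b • x) '' A) = ENNReal.ofReal (‖b‖ ^ k) * ν A) :
    IsHomogeneousMeasure F k ν := by
  intro b hb
  ext A hA
  have hpre : (fun x : E => b • x) ⁻¹' A = (fun x => b⁻¹ • x) '' A := Set.preimage_smul₀ hb A
  have hcoe : ENNReal.ofReal (‖b⁻¹‖ ^ k) = (‖b‖₊ ^ (-k) : ℝ≥0) := by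
    rw [ofReal_norm_rpow, nnnorm_inv, NNReal.inv_rpow, NNReal.rpow_neg]
  rw [Measure.map_apply (measurable_const_smul b) hA, hpre, hν b⁻¹ (inv_ne_zero hb) A hA, hcoe,
    Measure.coe_nnreal_smul_apply]

theorem pi {ι : Type*} [Fintype ι] {E : ι → Type*} [∀ i, MulAction F (E i)]
    [∀ i, MeasurableSpace (E i)] [∀ i, MeasurableConstSMul F (E i)] {k : ι → ℝ}
    {ν : ∀ i, Measure (E i)} [∀ i, SigmaFinite (ν i)]
    (hν : ∀ i, IsHomogeneousMeasure F (k i) (ν i)) :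
    IsHomogeneousMeasure F (∑ i, k i) (Measure.pi ν) := by
  intro b hb
  have hmap (i : ι) : SigmaFinite ((ν i).map fun x => b • x) :=
    (MeasurableEquiv.smul₀ b hb).sigmaFinite_map
  calc (Measure.pi ν).map (fun x => b • x)
      = Measure.pi fun i => (ν i).map fun x => b • x :=
        Measure.pi_map_pi (hμ := hmap) (f := fun _ x => b • x) fun _ =>
          (measurable_const_smul b).aemeasurable
    _ = ‖b‖₊ ^ (-∑ i, k i) • Measure.pi ν := by
        refine Measure.pi_eq fun s _ => ?_
        have hprod : ∏ i, ‖b‖₊ ^ (-k i) = ‖b‖₊ ^ (-∑ i, k i) := by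
          rw [← Finset.sum_neg_distrib]
          ext
          push_cast
          exact (Real.rpow_sum_of_pos (norm_pos_iff.2 hb) _ _).symm
        simp only [hν _ b hb, Measure.coe_nnreal_smul_apply, Measure.pi_pi,
          Finset.prod_mul_distrib, ← hprod, ENNReal.ofNNReal_finsetProd]

end IsHomogeneousMeasure

end Homogeneous

theorem stmt0_general {F V : Type*} [NormedField F] [LocallyCompactSpace F] [MeasurableSpace F]
    [BorelSpace F] [TopologicalSpace V] [T2Space V] [LocallyCompactSpace V] [MeasurableSpace V]
    [BorelSpace V] [MulAction F V] [ContinuousConstSMul F V] {μF : Measure F}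
    [μF.IsOpenPosMeasure] [IsFiniteMeasureOnCompacts μF] {vol : Measure V} {j k : ℝ}
    (hμF : IsHomogeneousMeasure F j μF) (hvol : IsHomogeneousMeasure F k vol) {q : V → F} {m : ℕ}
    (hq : Continuous q) (hqm : ∀ (b : F) (v : V), q (b • v) = b ^ m * q v) {μ : F → Measure V}
    (hμ : IsGelfandLeray q vol μF μ) {a b : F} (ha : a ≠ 0) (hb : b ≠ 0) :
    Measure.map (fun v : V => b • v) (μ a)
      = ENNReal.ofReal (‖b‖ ^ (m * j - k)) • μ (a * b ^ m) := by
  have hbm : b ^ m ≠ 0 := pow_ne_zero m hb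
  have hd : ‖b ^ m‖₊ ^ (-j) ≠ 0 := (NNReal.rpow_pos (nnnorm_pos.2 hbm)).ne'
  have hfactor : ENNReal.ofReal (‖b‖ ^ (m * j - k)) =
      (‖b‖₊ ^ (-k) / ‖b ^ m‖₊ ^ (-j) : ℝ≥0) := by
    rw [ofReal_norm_rpow, nnnorm_pow, ← NNReal.rpow_natCast, ← NNReal.rpow_mul,
      ← NNReal.rpow_sub (nnnorm_ne_zero_iff.2 hb)]
    ring_nf
  rw [hfactor, mul_comm a]
  exact hμ.map_eq_smul hq (Homeomorph.smulOfNeZero b hb) (Homeomorph.smulOfNeZero (b ^ m) hbm)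
    (mul_zero _) (hqm b) hd (hvol b hb) (hμF (b ^ m) hbm) ha

/-- Lemma 6.3 of the paper: homogeneity of the fiber measures of a
Gelfand–Leray family for a quadratic form over a locally compact normed field:
for `a, b ≠ 0`, the pushforward of `μ a` under the homothety `v ↦ b • v` equals
`‖b‖ ^ (2 - n) • μ (a * b ^ 2)`. -/
theorem stmt0 {F : Type*} [NontriviallyNormedField F] [LocallyCompactSpace F]
    [MeasurableSpace F] [BorelSpace F]
    (μF : Measure F) [μF.IsAddHaarMeasure] [SigmaFinite μF]
    (hscale : ∀ b : F, b ≠ 0 → ∀ A : Set F, MeasurableSet A →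
      μF ((fun x : F => b * x) '' A) = ENNReal.ofReal ‖b‖ * μF A)
    (n : ℕ) (hn : 1 ≤ n)
    (q : QuadraticForm F (Fin n → F))
    (μ : F → Measure (Fin n → F))
    (hreg : ∀ a : F, a ≠ 0 → (μ a).Regular)
    (hsupp : ∀ a : F, a ≠ 0 → μ a {v : Fin n → F | q v ≠ a} = 0)
    (hcont : ∀ f : (Fin n → F) → ℂ, Continuous f → HasCompactSupport f →
      (∀ v ∈ tsupport f, q v ≠ 0) →
      ContinuousOn (fun a : F => ∫ v, f v ∂ μ a) {a : F | a ≠ 0} ∧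
      ∃ K : Set F, IsCompact K ∧ (0 : F) ∉ K ∧
        ∀ a : F, a ≠ 0 → a ∉ K → (∫ v, f v ∂ μ a) = 0)
    (hGL : ∀ f : (Fin n → F) → ℂ, Continuous f → HasCompactSupport f →
      (∀ v ∈ tsupport f, q v ≠ 0) →
      (∫ v, f v ∂(Measure.pi fun _ : Fin n => μF))
        = ∫ a in {a : F | a ≠ 0}, (∫ v, f v ∂ μ a) ∂ μF) :
    ∀ a b : F, a ≠ 0 → b ≠ 0 →
      Measure.map (fun v : Fin n → F => b • v) (μ a)
        = ENNReal.ofReal (‖b‖ ^ ((2 : ℝ) - (n : ℝ))) • μ (a * b ^ 2) := by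
  have : ProperSpace F := .of_locallyCompactSpace F
  have hμF : IsHomogeneousMeasure F 1 μF := .of_measure_image (by simpa using hscale)
  exact fun a b ha hb => by
    simpa using stmt0_general (m := 2) hμF (.pi fun _ => hμF)
      (continuous_quadraticMap_of_finiteDimensional q)
      (fun b v => by rw [q.map_smul, smul_eq_mul, sq])
      ⟨hreg, hsupp, fun f hf hfc hf0 => (hcont f hf hfc hf0).1, hGL⟩ ha hb
end

section
/- Let v₁ ∈ ℚ_pⁿ with q(v₁) = 1, and let ⟨u,v⟩ := q(u+v) − q(u) − q(v) be the associated symmetric bilinear form. Let Φ : ℚ_pⁿ → ℂ be locally constant and compactly supported, let a ∈ ℚ_p∖{0}, and for each m ∈ ℕ set I_m(a) = ∫_{b ∈ p^{−m}ℤ_p} ( ∫_{ℚ_pⁿ} |a|_p^{n/2}·Φ(a·y)·ψ(a²b·q(y))·ψ(⟨v₁,y⟩) dv(y) )·ψ(−b) db. Then the sequence (I_m(a))_m is eventually constant: there exists M such that for all m ≥ M, I_m(a) = |a|_p^{−n/2}·∫ Φ(x)·ψ(a^{−1}·⟨v₁,x⟩) dμ₁(x). (This is the computational core of Proposition 11.1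 of the paper, expressing the (N,ψ)-orbital integral of the transferred test function as an explicit integral transform over the hyperboloid X₁, with the Weil representation action and the normalized Fourier transform written out explicitly; the Weil index γ has been cancelled from both sides.) -/
open MeasureTheory

/-! For fixed `x`, integrating `ψ (b * (q x - 1))` over `b ∈ p⁻ᵐℤ_p` gives `pᵐ` times the indicator
of `q x ∈ 1 + pᵐℤ_p`, because `ψ` has conductor `ℤ_p`. By Fubini, after the substitution `x = a • y`
(whose Jacobian `|a|⁻ⁿ` turns `|a|^{n/2}` into `|a|^{-n/2}`), the truncated integral is `pᵐ` times
the integral of `Φ x * ψ (a⁻¹ * ⟨v₁, x⟩)` over the shell `q⁻¹(1 + pᵐℤ_p)`, that is, the average of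
its fibre integrals over a ball about `1`. Fibre integrals are locally constant, so this average is
the fibre integral over `X₁` as soon as the ball is small enough. -/

section HaarScaling

open Measure
open scoped Pointwise

variable {G A : Type*} [Group G] [AddCommGroup A] [DistribMulAction G A] [TopologicalSpace A]
  [IsTopologicalAddGroup A] [LocallyCompactSpace A] [ContinuousConstSMul G A]

theorem distribHaarChar_pi {ι : Type*} [Fintype ι] [SecondCountableTopology A] (g : G) :
    distribHaarChar (ι → A) g = distribHaarChar A g ^ Fintype.card ι := by
  borelize A
  let μ : Measure A := addHaar
  obtain ⟨K⟩ : Nonempty (TopologicalSpace.PositiveCompacts A) := inferInstance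
  have hK : μ K ≠ 0 := (measure_pos_of_nonempty_interior μ K.interior_nonempty).ne'
  refine distribHaarChar_eq_of_measure_smul_eq_mul (μ := Measure.pi fun _ : ι => μ)
    (s := Set.univ.pi fun _ => K) ?_ ?_ ?_
  · rw [pi_pi]
    exact Finset.prod_ne_zero_iff.2 fun _ _ => hK
  · rw [pi_pi]
    exact ENNReal.prod_ne_top fun _ _ => K.isCompact.measure_ne_top
  · rw [Set.smul_set_univ_pi, pi_pi, pi_pi]
    simp [← distribHaarChar_mul μ, mul_pow]

theorem integral_comp_smul_eq_inv_distribHaarChar_smul [MeasurableSpace A] [BorelSpace A]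
    {E : Type*} [NormedAddCommGroup E] [NormedSpace ℝ E] (μ : Measure A) [μ.IsAddHaarMeasure]
    [μ.Regular] (g : G) (f : A → E) :
    ∫ x, f (g • x) ∂μ = (distribHaarChar A g)⁻¹ • ∫ x, f x ∂μ := by
  have hmap : μ.map (Homeomorph.smul g) = (distribHaarChar A g)⁻¹ • μ := by
    ext s hs
    rw [map_apply (Homeomorph.smul g).measurable hs, Measure.smul_apply, ENNReal.smul_def,
      ← map_inv, smul_eq_mul, distribHaarChar_mul μ, ← Set.preimage_smul]
    rfl
  rw [← integral_smul_nnreal_measure, ← hmap,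
    (Homeomorph.smul g).measurableEmbedding.integral_map]
  rfl

end HaarScaling

section PadicHaar

open Metric Measure
open scoped Pointwise

variable {p : ℕ} [Fact p.Prime]

theorem padic_closedBall_zero_one_eq_iUnion_ball :
    closedBall (0 : ℚ_[p]) 1 = ⋃ i ∈ Finset.range p, ball (i : ℚ_[p]) 1 := by
  ext x
  simp only [mem_closedBall_zero_iff, Set.mem_iUnion, Finset.mem_range, exists_prop,
    mem_ball_iff_norm]
  constructor
  · intro hx
    let z : ℤ_[p] := ⟨x, hx⟩
    exact ⟨z.zmodRepr, z.zmodRepr_lt_p, z.norm_sub_zmodRepr_lt_one⟩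
  · rintro ⟨i, -, hi⟩
    have hi₁ : ‖(i : ℚ_[p])‖ ≤ 1 := by simpa using Padic.norm_int_le_one (p := p) i
    simpa using (Padic.nonarchimedean (x - (i : ℚ_[p])) i).trans (max_le hi.le hi₁)

theorem pairwiseDisjoint_padic_ball_natCast :
    (Finset.range p : Set ℕ).PairwiseDisjoint fun i => ball (i : ℚ_[p]) 1 := by
  intro i hi j hj hij
  refine (IsUltrametricDist.ball_eq_or_disjoint _ _ _).resolve_left fun hball => hij ?_
  have hmem : (i : ℚ_[p]) ∈ ball (j : ℚ_[p]) 1 := hball ▸ mem_ball_self one_pos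
  rw [mem_ball_iff_norm] at hmem
  have hdvd : (p : ℤ) ∣ i - j := Padic.norm_intCast_lt_one_iff.1 (by exact_mod_cast hmem)
  simp only [Finset.coe_range, Set.mem_Iio] at hi hj
  have := Int.eq_zero_of_abs_lt_dvd hdvd (by rw [abs_lt]; omega)
  omega

theorem units_smul_padic_closedBall_zero_one (a : ℚ_[p]ˣ) :
    a • closedBall (0 : ℚ_[p]) 1 = closedBall 0 ‖(a : ℚ_[p])‖ := by
  simpa [Units.smul_def] using smul_closedBall' a.ne_zero (0 : ℚ_[p]) 1

theorem padic_closedBall_zero_norm_p : closedBall (0 : ℚ_[p]) ‖(p : ℚ_[p])‖ = ball 0 1 := by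
  ext x
  simpa using (Padic.norm_lt_pow_iff_norm_le_pow_sub_one x 0).symm

theorem addHaar_padic_closedBall_zero_one [MeasurableSpace ℚ_[p]] [BorelSpace ℚ_[p]]
    (μ : Measure ℚ_[p]) [μ.IsAddHaarMeasure] :
    μ (closedBall 0 1) = p * μ (ball 0 1) := by
  rw [padic_closedBall_zero_one_eq_iUnion_ball,
    measure_biUnion_finset pairwiseDisjoint_padic_ball_natCast fun _ _ => measurableSet_ball]
  simp [addHaar_ball_center]

theorem coe_distribHaarChar_padic [MeasurableSpace ℚ_[p]] [BorelSpace ℚ_[p]]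
    (μ : Measure ℚ_[p]) [μ.IsAddHaarMeasure] (a : ℚ_[p]ˣ) :
    distribHaarChar ℚ_[p] a = μ (closedBall 0 ‖(a : ℚ_[p])‖) / μ (closedBall 0 1) := by
  rw [distribHaarChar_eq_div (measure_closedBall_pos μ _ one_pos).ne'
    measure_closedBall_lt_top.ne, units_smul_padic_closedBall_zero_one]

theorem distribHaarChar_padic_mk0_p (hp : (p : ℚ_[p]) ≠ 0) :
    distribHaarChar ℚ_[p] (Units.mk0 (p : ℚ_[p]) hp) = ‖(p : ℚ_[p])‖₊ := by
  borelize ℚ_[p]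
  refine distribHaarChar_eq_of_measure_smul_eq_mul (μ := addHaar)
    (measure_closedBall_pos _ (0 : ℚ_[p]) one_pos).ne' measure_closedBall_lt_top.ne ?_
  have hp' : (p : NNReal) ≠ 0 := Nat.cast_ne_zero.2 (Fact.out : p.Prime).ne_zero
  have hnorm : ‖(p : ℚ_[p])‖₊ = (p : NNReal)⁻¹ := by ext; simp
  rw [units_smul_padic_closedBall_zero_one, Units.val_mk0, padic_closedBall_zero_norm_p,
    addHaar_padic_closedBall_zero_one, hnorm, ENNReal.coe_inv hp', ENNReal.coe_natCast, ← mul_assoc,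
    ENNReal.inv_mul_cancel (by exact_mod_cast hp') (ENNReal.natCast_ne_top p), one_mul]

theorem distribHaarChar_padic (a : ℚ_[p]ˣ) : distribHaarChar ℚ_[p] a = ‖(a : ℚ_[p])‖₊ := by
  borelize ℚ_[p]
  have hp : (p : ℚ_[p]) ≠ 0 := Nat.cast_ne_zero.2 (Fact.out : p.Prime).ne_zero
  let π : ℚ_[p]ˣ := Units.mk0 p hp
  have hnorm : ‖((π ^ (a : ℚ_[p]).valuation : ℚ_[p]ˣ) : ℚ_[p])‖ = ‖(a : ℚ_[p])‖ := by
    simp [π, Padic.norm_eq_zpow_neg_valuation a.ne_zero]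
  have hchar : distribHaarChar ℚ_[p] a = distribHaarChar ℚ_[p] (π ^ (a : ℚ_[p]).valuation) := by
    refine ENNReal.coe_injective ?_
    rw [coe_distribHaarChar_padic addHaar, coe_distribHaarChar_padic addHaar, hnorm]
  rw [hchar, map_zpow, distribHaarChar_padic_mk0_p hp, ← nnnorm_zpow]
  ext
  simpa [π] using hnorm

variable [MeasurableSpace ℚ_[p]] [BorelSpace ℚ_[p]]

theorem addHaar_real_padic_closedBall (μ : Measure ℚ_[p]) [μ.IsAddHaarMeasure] (c : ℚ_[p])
    (m : ℤ) : μ.real (closedBall c ((p : ℝ) ^ m)) = (p : ℝ) ^ m * μ.real (closedBall 0 1) := by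
  have hp : (p : ℚ_[p]) ≠ 0 := Nat.cast_ne_zero.2 (Fact.out : p.Prime).ne_zero
  let a : ℚ_[p]ˣ := Units.mk0 (p : ℚ_[p]) hp ^ (-m)
  have ha : ‖(a : ℚ_[p])‖ = (p : ℝ) ^ m := by simp [a]
  rw [addHaar_real_closedBall_center, ← ha, ← units_smul_padic_closedBall_zero_one, measureReal_def,
    ← distribHaarChar_mul μ, distribHaarChar_padic, ENNReal.toReal_mul]
  rfl

theorem integral_pi_comp_smul_padic {ι E : Type*} [Fintype ι] [NormedAddCommGroup E]
    [NormedSpace ℝ E] (μ : Measure ℚ_[p]) [μ.IsAddHaarMeasure] {a : ℚ_[p]} (ha : a ≠ 0)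
    (f : (ι → ℚ_[p]) → E) :
    ∫ y, f (a • y) ∂(Measure.pi fun _ : ι => μ)
      = (‖a‖ ^ Fintype.card ι)⁻¹ • ∫ x, f x ∂(Measure.pi fun _ : ι => μ) := by
  have h := integral_comp_smul_eq_inv_distribHaarChar_smul (Measure.pi fun _ : ι => μ)
    (Units.mk0 a ha) f
  rw [distribHaarChar_pi, distribHaarChar_padic] at h
  simpa [Units.smul_def, NNReal.smul_def] using h

end PadicHaar

section Characters

open Metric
open scoped Topology

theorem isLocallyConstant_addChar_of_eventually_eq_one {A M : Type*} [AddGroup A]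
    [TopologicalSpace A] [ContinuousConstVAdd A A] [Monoid M] {ψ : AddChar A M}
    (hψ : ∀ᶠ x in 𝓝 0, ψ x = 1) : IsLocallyConstant ψ := by
  refine (IsLocallyConstant.iff_eventually_eq _).2 fun x => ?_
  have hx : Filter.Tendsto (fun y => -x + y) (𝓝 x) (𝓝 0) := by
    simpa using ((continuous_const_vadd (-x)).tendsto x)
  filter_upwards [hx.eventually hψ] with y hy
  rw [← add_neg_cancel_left x y, ψ.map_add_eq_mul, hy, mul_one]

theorem setIntegral_addChar_eq_zero {A 𝕜 : Type*} [AddGroup A] [MeasurableSpace A]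
    [MeasurableAdd A] [RCLike 𝕜] (μ : Measure A) [μ.IsAddRightInvariant] {ψ : AddChar A 𝕜}
    {H : AddSubgroup A} (hH : MeasurableSet (H : Set A)) {x : A} (hx : x ∈ H) (hψ : ψ x ≠ 1) :
    ∫ b in (H : Set A), ψ b ∂μ = 0 := by
  have htranslate : ∀ b, (H : Set A).indicator ψ (b + x) = (H : Set A).indicator ψ b * ψ x := by
    intro b
    by_cases hb : b ∈ H
    · simp [hb, H.add_mem hb hx, ψ.map_add_eq_mul]
    · simp [hb, H.add_mem_cancel_right hx]
  have hmul : (∫ b in (H : Set A), ψ b ∂μ) * ψ x = ∫ b in (H : Set A), ψ b ∂μ := by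
    rw [← integral_indicator hH, ← integral_mul_const]
    simp_rw [← htranslate]
    exact integral_add_right_eq_self _ x
  by_contra hne
  exact hψ (mul_left_cancel₀ hne (hmul.trans (mul_one _).symm))

variable {p : ℕ} [Fact p.Prime]

/-- An additive character of `ℚ_[p]` with conductor `ℤ_[p]`: trivial on `ℤ_[p]` but not on
`p⁻¹ℤ_[p]`. -/
structure IsUnramifiedAddChar (ψ : AddChar ℚ_[p] ℂ) : Prop where
  map_eq_one : ∀ x, ‖x‖ ≤ 1 → ψ x = 1
  exists_map_ne_one : ∃ x, ‖x‖ ≤ (p : ℝ) ∧ ψ x ≠ 1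

namespace IsUnramifiedAddChar

variable {ψ : AddChar ℚ_[p] ℂ}

theorem isLocallyConstant (hψ : IsUnramifiedAddChar ψ) : IsLocallyConstant ψ := by
  refine isLocallyConstant_addChar_of_eventually_eq_one ?_
  filter_upwards [closedBall_mem_nhds 0 one_pos] with x hx
  exact hψ.map_eq_one x (mem_closedBall_zero_iff.1 hx)

theorem exists_map_mul_ne_one (hψ : IsUnramifiedAddChar ψ) {c : ℚ_[p]} {m : ℤ}
    (hc : (p : ℝ) ^ (-m) < ‖c‖) : ∃ x ∈ closedBall 0 ((p : ℝ) ^ m), ψ (c * x) ≠ 1 := by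
  have hp : (0 : ℝ) < p := Nat.cast_pos.2 (Fact.out : p.Prime).pos
  obtain ⟨x, hx, hx₁⟩ := hψ.exists_map_ne_one
  have hc₀ : 0 < ‖c‖ := (zpow_pos hp _).trans hc
  have hc' : (p : ℝ) ^ (-m + 1) ≤ ‖c‖ :=
    not_lt.1 fun h => hc.not_ge ((Padic.norm_le_pow_iff_norm_lt_pow_add_one c (-m)).2 h)
  refine ⟨x / c, ?_, by rwa [mul_div_cancel₀ _ (norm_pos_iff.1 hc₀)]⟩
  rw [mem_closedBall_zero_iff, norm_div, div_le_iff₀ hc₀]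
  calc ‖x‖ ≤ p := hx
    _ = (p : ℝ) ^ m * (p : ℝ) ^ (-m + 1) := by rw [← zpow_add₀ hp.ne']; simp
    _ ≤ _ := by gcongr

variable [MeasurableSpace ℚ_[p]] [BorelSpace ℚ_[p]]

theorem setIntegral_closedBall_map_mul (hψ : IsUnramifiedAddChar ψ) {μ : Measure ℚ_[p]}
    [μ.IsAddHaarMeasure] (hμ : μ (closedBall 0 1) = 1) (m : ℤ) (c : ℚ_[p]) :
    ∫ b in closedBall 0 ((p : ℝ) ^ m), ψ (c * b) ∂μ
      = (closedBall 0 ((p : ℝ) ^ (-m))).indicator (fun _ => (p : ℂ) ^ m) c := by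
  have hp : (0 : ℝ) < p := Nat.cast_pos.2 (Fact.out : p.Prime).pos
  by_cases hc : c ∈ closedBall 0 ((p : ℝ) ^ (-m))
  · have hone : ∀ b ∈ closedBall 0 ((p : ℝ) ^ m), ψ (c * b) = 1 := fun b hb => by
      refine hψ.map_eq_one _ ?_
      rw [mem_closedBall_zero_iff] at hb hc
      calc ‖c * b‖ = ‖c‖ * ‖b‖ := norm_mul c b
        _ ≤ (p : ℝ) ^ (-m) * (p : ℝ) ^ m := by gcongr
        _ = 1 := by rw [zpow_neg, inv_mul_cancel₀ (zpow_ne_zero _ hp.ne')]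
    rw [setIntegral_congr_fun measurableSet_closedBall hone, setIntegral_const,
      addHaar_real_padic_closedBall, measureReal_def, hμ, Set.indicator_of_mem hc]
    simp
  · rw [Set.indicator_of_notMem hc]
    obtain ⟨x, hx, hψx⟩ := hψ.exists_map_mul_ne_one (not_le.1 (mt mem_closedBall_zero_iff.2 hc))
    exact setIntegral_addChar_eq_zero μ (ψ := ψ.mulShift c)
      (H := (IsUltrametricDist.closedBall_openAddSubgroup ℚ_[p] (zpow_pos hp m)).toAddSubgroup)
      measurableSet_closedBall hx hψx

end IsUnramifiedAddChar

end Characters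

section TruncatedFourier

open Metric

theorem setIntegral_integral_swap_of_isClopen {X Y E : Type*} [TopologicalSpace X]
    [MeasurableSpace X] [OpensMeasurableSpace X] [TopologicalSpace Y] [MeasurableSpace Y]
    [OpensMeasurableSpace Y] [NormedAddCommGroup E] [NormedSpace ℝ E] {μ : Measure Y}
    {ν : Measure X} [IsFiniteMeasureOnCompacts μ] [IsFiniteMeasureOnCompacts ν] {f : Y → X → E}
    (hf : Continuous f.uncurry) {S : Set Y} (hSo : IsClopen S) (hS : IsCompact S) {K : Set X}
    (hK : IsCompact K) (hKc : IsClosed K) (hfK : ∀ y, ∀ x ∉ K, f y x = 0) :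
    ∫ y in S, (∫ x, f y x ∂ν) ∂μ = ∫ x, (∫ y in S, f y x ∂μ) ∂ν := by
  let g : Y → X → E := fun y x => S.indicator (fun y => f y x) y
  have hg : Continuous g.uncurry :=
    hf.indicator (s := Prod.fst ⁻¹' S) (by simp [(hSo.preimage continuous_fst).frontier_eq])
  have hgc : HasCompactSupport g.uncurry := by
    refine .intro' (hS.prod hK) (hSo.isClosed.prod hKc) ?_
    rintro ⟨y, x⟩ hyx
    by_cases hy : y ∈ S
    · simp [g, hy, hfK y x fun hx => hyx ⟨hy, hx⟩]
    · simp [g, hy]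
  have hswap := integral_integral_swap_of_hasCompactSupport (μ := μ) (ν := ν) hg hgc
  have hleft : ∀ y, ∫ x, g y x ∂ν = S.indicator (fun y => ∫ x, f y x ∂ν) y := fun y => by
    by_cases hy : y ∈ S <;> simp [g, hy]
  simp_rw [hleft] at hswap
  simpa only [g, integral_indicator hSo.isOpen.measurableSet] using hswap

variable {p : ℕ} [Fact p.Prime] [MeasurableSpace ℚ_[p]] [BorelSpace ℚ_[p]]

theorem IsUnramifiedAddChar.setIntegral_integral_mul {X : Type*} [TopologicalSpace X]
    [MeasurableSpace X] [OpensMeasurableSpace X] {ψ : AddChar ℚ_[p] ℂ}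
    (hψ : IsUnramifiedAddChar ψ) {lam : Measure ℚ_[p]} [lam.IsAddHaarMeasure]
    (hlam : lam (closedBall 0 1) = 1) {ν : Measure X} [IsFiniteMeasureOnCompacts ν]
    {Q : X → ℚ_[p]} (hQ : Continuous Q) {F : X → ℂ} (hF : Continuous F)
    (hFc : HasCompactSupport F) (m : ℤ) (t : ℚ_[p]) :
    ∫ b in closedBall 0 ((p : ℝ) ^ m), (∫ x, F x * ψ (b * Q x) ∂ν) * ψ (-(b * t)) ∂lam
      = (p : ℂ) ^ m * ∫ x in Q ⁻¹' closedBall t ((p : ℝ) ^ (-m)), F x ∂ν := by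
  have hp : (0 : ℝ) < p := Nat.cast_pos.2 (Fact.out : p.Prime).pos
  have hψc : Continuous ψ := hψ.isLocallyConstant.continuous
  have hcont : Continuous (Function.uncurry fun b x => F x * ψ ((Q x - t) * b)) := by
    simp only [Function.uncurry_def]
    fun_prop
  calc ∫ b in closedBall 0 ((p : ℝ) ^ m), (∫ x, F x * ψ (b * Q x) ∂ν) * ψ (-(b * t)) ∂lam
      = ∫ b in closedBall 0 ((p : ℝ) ^ m), ∫ x, F x * ψ ((Q x - t) * b) ∂ν ∂lam := by
        simp_rw [← integral_mul_const, mul_assoc, ← ψ.map_add_eq_mul]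
        congr! 6
        ring
    _ = ∫ x, ∫ b in closedBall 0 ((p : ℝ) ^ m), F x * ψ ((Q x - t) * b) ∂lam ∂ν :=
        setIntegral_integral_swap_of_isClopen hcont
          (IsUltrametricDist.isClopen_closedBall _ (zpow_pos hp m).ne') (isCompact_closedBall _ _)
          hFc (isClosed_tsupport F) fun _ x hx => by
            rw [image_eq_zero_of_notMem_tsupport hx, zero_mul]
    _ = ∫ x, (p : ℂ) ^ m * (Q ⁻¹' closedBall t ((p : ℝ) ^ (-m))).indicator F x ∂ν := by
        refine integral_congr_ae (.of_forall fun x => ?_)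
        beta_reduce
        rw [integral_const_mul, hψ.setIntegral_closedBall_map_mul hlam]
        have hmem : Q x - t ∈ closedBall 0 ((p : ℝ) ^ (-m)) ↔
            x ∈ Q ⁻¹' closedBall t ((p : ℝ) ^ (-m)) := by
          rw [mem_closedBall_zero_iff, Set.mem_preimage, mem_closedBall_iff_norm]
        by_cases hx : x ∈ Q ⁻¹' closedBall t ((p : ℝ) ^ (-m))
        · rw [Set.indicator_of_mem hx, Set.indicator_of_mem (hmem.2 hx), mul_comm]
        · rw [Set.indicator_of_notMem hx, Set.indicator_of_notMem (mt hmem.1 hx), mul_zero,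
            mul_zero]
    _ = _ := by
        rw [integral_const_mul, integral_indicator (hQ.measurable measurableSet_closedBall)]

end TruncatedFourier

section GelfandLeray

open Filter Metric
open scoped Topology

/-- Locally constant functions compactly supported off the zero locus of `Q`: the functions a
Gelfand–Leray family for `Q` is tested on. -/
structure IsTestFunctionOffZeros {X 𝕜 : Type*} [TopologicalSpace X] [Zero 𝕜] (Q : X → 𝕜)
    (f : X → ℂ) : Prop where
  isLocallyConstant : IsLocallyConstant f
  hasCompactSupport : HasCompactSupport f
  ne_zero_of_mem_tsupport : ∀ x ∈ tsupport f, Q x ≠ 0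

theorem IsTestFunctionOffZeros.indicator_preimage {X 𝕜 : Type*} [TopologicalSpace X] [Zero 𝕜]
    [TopologicalSpace 𝕜] {Q : X → 𝕜} {F : X → ℂ} {U : Set 𝕜} (hQ : Continuous Q)
    (hF : IsLocallyConstant F) (hFc : HasCompactSupport F) (hU : IsClopen U) (hU₀ : 0 ∉ U) :
    IsTestFunctionOffZeros Q ((Q ⁻¹' U).indicator F) where
  isLocallyConstant := (LocallyConstant.indicator ⟨F, hF⟩ (hU.preimage hQ)).isLocallyConstant
  hasCompactSupport := hFc.mono <| by
    rw [Set.support_indicator]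
    exact Set.inter_subset_right
  ne_zero_of_mem_tsupport x hx hx₀ := hU₀ <| by
    rw [← hx₀]
    exact closure_minimal Set.support_indicator_subset (hU.preimage hQ).isClosed hx

/-- A Gelfand–Leray family for `Q : X → 𝕜`: measures `μ a`, for `a ≠ 0`, concentrated on the fibres
`Q ⁻¹' {a}`, which disintegrate `ν` off the zero locus of `Q` and vary locally constantly with `a`
when integrated against test functions. The value `μ 0` is unconstrained. -/
structure IsGelfandLerayFamily {X 𝕜 : Type*} [TopologicalSpace X] [MeasurableSpace X] [Zero 𝕜]
    [TopologicalSpace 𝕜] [MeasurableSpace 𝕜] (Q : X → 𝕜) (ν : Measure X) (lam : Measure 𝕜)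
    (μ : 𝕜 → Measure X) : Prop where
  measure_ne_eq_zero : ∀ a, a ≠ 0 → μ a {x | Q x ≠ a} = 0
  eventually_integral_eq : ∀ f, IsTestFunctionOffZeros Q f →
    ∀ a, a ≠ 0 → ∀ᶠ a' in 𝓝 a, ∫ x, f x ∂μ a' = ∫ x, f x ∂μ a
  integral_eq : ∀ f, IsTestFunctionOffZeros Q f →
    ∫ x, f x ∂ν = ∫ a in {a | a ≠ 0}, ∫ x, f x ∂μ a ∂lam

namespace IsGelfandLerayFamily

variable {X 𝕜 : Type*} [TopologicalSpace X] [MeasurableSpace X] [Zero 𝕜] [TopologicalSpace 𝕜]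
  [MeasurableSpace 𝕜] {Q : X → 𝕜} {ν : Measure X} {lam : Measure 𝕜} {μ : 𝕜 → Measure X}
  {F : X → ℂ} {U : Set 𝕜}

theorem integral_indicator_preimage (h : IsGelfandLerayFamily Q ν lam μ) {a : 𝕜} (ha : a ≠ 0) :
    ∫ x, (Q ⁻¹' U).indicator F x ∂μ a = U.indicator (fun a => ∫ x, F x ∂μ a) a := by
  have hae : ∀ᵐ x ∂μ a, Q x = a := h.measure_ne_eq_zero a ha
  by_cases haU : a ∈ U
  · rw [Set.indicator_of_mem haU]
    refine integral_congr_ae (hae.mono fun x hx => Set.indicator_of_mem ?_ _)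
    rwa [Set.mem_preimage, hx]
  · rw [Set.indicator_of_notMem haU]
    refine integral_eq_zero_of_ae (hae.mono fun x hx => Set.indicator_of_notMem ?_ _)
    rwa [Set.mem_preimage, hx]

theorem setIntegral_preimage [OpensMeasurableSpace X] [OpensMeasurableSpace 𝕜] [T1Space 𝕜]
    (h : IsGelfandLerayFamily Q ν lam μ) (hQ : Continuous Q) (hF : IsLocallyConstant F)
    (hFc : HasCompactSupport F) (hU : IsClopen U) (hU₀ : 0 ∉ U) :
    ∫ x in Q ⁻¹' U, F x ∂ν = ∫ a in U, ∫ x, F x ∂μ a ∂lam := by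
  have hf := IsTestFunctionOffZeros.indicator_preimage hQ hF hFc hU hU₀
  have hUne : U ⊆ {a | a ≠ 0} := fun a ha ha₀ => hU₀ (ha₀ ▸ ha)
  calc ∫ x in Q ⁻¹' U, F x ∂ν = ∫ x, (Q ⁻¹' U).indicator F x ∂ν :=
        (integral_indicator (hU.preimage hQ).isOpen.measurableSet).symm
    _ = ∫ a in {a | a ≠ 0}, U.indicator (fun a => ∫ x, F x ∂μ a) a ∂lam := by
        rw [h.integral_eq _ hf]
        exact setIntegral_congr_fun isOpen_ne.measurableSet fun a ha =>
          h.integral_indicator_preimage ha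
    _ = ∫ a in U, ∫ x, F x ∂μ a ∂lam := by
        rw [setIntegral_indicator hU.isOpen.measurableSet, Set.inter_eq_right.2 hUne]

theorem eventually_integral_eq_of_isLocallyConstant [TotallySeparatedSpace 𝕜]
    (h : IsGelfandLerayFamily Q ν lam μ) (hQ : Continuous Q) (hF : IsLocallyConstant F)
    (hFc : HasCompactSupport F) {t : 𝕜} (ht : t ≠ 0) :
    ∀ᶠ a in 𝓝 t, ∫ x, F x ∂μ a = ∫ x, F x ∂μ t := by
  obtain ⟨U, hU, htU, hU₀⟩ := exists_isClopen_of_totally_separated ht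
  have hf := IsTestFunctionOffZeros.indicator_preimage hQ hF hFc hU hU₀
  filter_upwards [h.eventually_integral_eq _ hf t ht, hU.isOpen.mem_nhds htU] with a hat haU
  have ha : a ≠ 0 := fun ha₀ => hU₀ (ha₀ ▸ haU)
  rwa [h.integral_indicator_preimage ha, h.integral_indicator_preimage ht,
    Set.indicator_of_mem haU, Set.indicator_of_mem htU] at hat

theorem eventually_smallSets_setIntegral_preimage_eq [OpensMeasurableSpace X]
    [OpensMeasurableSpace 𝕜] [TotallySeparatedSpace 𝕜] (h : IsGelfandLerayFamily Q ν lam μ)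
    (hQ : Continuous Q) (hF : IsLocallyConstant F) (hFc : HasCompactSupport F) {t : 𝕜}
    (ht : t ≠ 0) : ∀ᶠ U in (𝓝 t).smallSets, IsClopen U →
      ∫ x in Q ⁻¹' U, F x ∂ν = lam.real U • ∫ x, F x ∂μ t := by
  have hconst := h.eventually_integral_eq_of_isLocallyConstant hQ hF hFc ht
  filter_upwards [(hconst.and (isOpen_ne.mem_nhds ht)).smallSets] with U hU hUclopen
  rw [h.setIntegral_preimage hQ hF hFc hUclopen fun h₀ => (hU 0 h₀).2 rfl,
    setIntegral_congr_fun hUclopen.isOpen.measurableSet fun a ha => (hU a ha).1, setIntegral_const]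

theorem eventually_setIntegral_integral_mul_addChar_eq {p : ℕ} [Fact p.Prime]
    [MeasurableSpace ℚ_[p]] [BorelSpace ℚ_[p]] [OpensMeasurableSpace X] {Q : X → ℚ_[p]}
    {lam : Measure ℚ_[p]} {μ : ℚ_[p] → Measure X} [IsFiniteMeasureOnCompacts ν]
    [lam.IsAddHaarMeasure] (hlam : lam (closedBall 0 1) = 1)
    (h : IsGelfandLerayFamily Q ν lam μ) (hQ : Continuous Q) {ψ : AddChar ℚ_[p] ℂ}
    (hψ : IsUnramifiedAddChar ψ) (hF : IsLocallyConstant F) (hFc : HasCompactSupport F)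
    {t : ℚ_[p]} (ht : t ≠ 0) :
    ∀ᶠ m : ℕ in atTop, ∫ b in closedBall 0 ((p : ℝ) ^ (m : ℤ)),
      (∫ x, F x * ψ (b * Q x) ∂ν) * ψ (-(b * t)) ∂lam = ∫ x, F x ∂μ t := by
  have hp₁ : (1 : ℝ) < p := Nat.one_lt_cast.2 (Fact.out : p.Prime).one_lt
  have hp : (0 : ℝ) < p := zero_lt_one.trans hp₁
  have hballs : Tendsto (fun m : ℕ => closedBall t ((p : ℝ) ^ (-(m : ℤ)))) atTop
      (𝓝 t).smallSets := by
    refine (tendsto_closedBall_smallSets t).comp ?_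
    simpa using tendsto_pow_atTop_nhds_zero_of_lt_one (inv_nonneg.2 hp.le)
      (inv_lt_one_of_one_lt₀ hp₁)
  filter_upwards [hballs.eventually
    (h.eventually_smallSets_setIntegral_preimage_eq hQ hF hFc ht)] with m hm
  rw [hψ.setIntegral_integral_mul hlam hQ hF.continuous hFc,
    hm (IsUltrametricDist.isClopen_closedBall _ (zpow_pos hp _).ne'),
    addHaar_real_padic_closedBall, measureReal_def, hlam, Complex.real_smul, ← mul_assoc]
  have hpC : (p : ℂ) ≠ 0 := Nat.cast_ne_zero.2 (Fact.out : p.Prime).ne_zero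
  simp [hpC]

end IsGelfandLerayFamily

end GelfandLeray

section OrbitalIntegral

open Metric

theorem continuous_quadraticMap {𝕜 E N : Type*} [NontriviallyNormedField 𝕜] [CompleteSpace 𝕜]
    [NormedAddCommGroup E] [NormedSpace 𝕜 E] [FiniteDimensional 𝕜 E] [NormedAddCommGroup N]
    [NormedSpace 𝕜 N] (q : QuadraticMap 𝕜 E N) :
    Continuous q := by
  obtain ⟨B, rfl⟩ := LinearMap.BilinMap.toQuadraticMap_surjective q
  have hB : Continuous fun x => B.toContinuousBilinearMap x x := by fun_prop
  exact hB

variable {p : ℕ} [Fact p.Prime] [MeasurableSpace ℚ_[p]] [BorelSpace ℚ_[p]] {ι : Type*} [Fintype ι]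

theorem integral_pi_rpow_smul_eq_quadraticForm {lam : Measure ℚ_[p]} [lam.IsAddHaarMeasure]
    (ψ : AddChar ℚ_[p] ℂ) (q : QuadraticForm ℚ_[p] (ι → ℚ_[p])) (ℓ : (ι → ℚ_[p]) →ₗ[ℚ_[p]] ℚ_[p])
    (Φ : (ι → ℚ_[p]) → ℂ) {a : ℚ_[p]} (ha : a ≠ 0) (b : ℚ_[p]) :
    ∫ y, ‖a‖ ^ ((Fintype.card ι : ℝ) / 2) • (Φ (a • y) * ψ (a ^ 2 * b * q y) * ψ (ℓ y))
        ∂(Measure.pi fun _ : ι => lam)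
      = ‖a‖ ^ (-((Fintype.card ι : ℝ) / 2)) • ∫ x, Φ x * ψ (a⁻¹ * ℓ x) * ψ (b * q x)
          ∂(Measure.pi fun _ : ι => lam) := by
  have hscale : ∀ y, Φ (a • y) * ψ (a ^ 2 * b * q y) * ψ (ℓ y)
      = (fun x => Φ x * ψ (a⁻¹ * ℓ x) * ψ (b * q x)) (a • y) := fun y => by
    simp only [map_smul, QuadraticMap.map_smul, smul_eq_mul, inv_mul_cancel_left₀ ha]
    rw [mul_right_comm, show a ^ 2 * b * q y = b * (a * a * q y) by ring]
  have ha' : 0 < ‖a‖ := norm_pos_iff.2 ha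
  simp_rw [hscale]
  rw [integral_smul, integral_pi_comp_smul_padic lam ha fun x => Φ x * ψ (a⁻¹ * ℓ x) * ψ (b * q x),
    smul_smul, ← Real.rpow_natCast, ← Real.rpow_neg ha'.le, ← Real.rpow_add ha']
  congr 2
  ring

theorem stmt8_general {lam : Measure ℚ_[p]} [lam.IsAddHaarMeasure]
    (hlam : lam (closedBall 0 1) = 1) {ψ : AddChar ℚ_[p] ℂ} (hψ : IsUnramifiedAddChar ψ)
    {q : QuadraticForm ℚ_[p] (ι → ℚ_[p])} {μ : ℚ_[p] → Measure (ι → ℚ_[p])}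
    (hμ : IsGelfandLerayFamily q (Measure.pi fun _ : ι => lam) lam μ)
    (ℓ : (ι → ℚ_[p]) →ₗ[ℚ_[p]] ℚ_[p]) {Φ : (ι → ℚ_[p]) → ℂ} (hΦ : IsLocallyConstant Φ)
    (hΦc : HasCompactSupport Φ) {a t : ℚ_[p]} (ha : a ≠ 0) (ht : t ≠ 0) :
    ∃ M : ℕ, ∀ m : ℕ, M ≤ m →
      ∫ b in closedBall 0 ((p : ℝ) ^ (m : ℤ)),
        (∫ y, ‖a‖ ^ ((Fintype.card ι : ℝ) / 2) • (Φ (a • y) * ψ (a ^ 2 * b * q y) * ψ (ℓ y))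
          ∂(Measure.pi fun _ : ι => lam)) * ψ (-(b * t)) ∂lam
      = ‖a‖ ^ (-((Fintype.card ι : ℝ) / 2)) • ∫ x, Φ x * ψ (a⁻¹ * ℓ x) ∂μ t := by
  have hℓ : Continuous fun x => a⁻¹ * ℓ x :=
    continuous_const.mul ℓ.continuous_of_finiteDimensional
  have hinversion := hμ.eventually_setIntegral_integral_mul_addChar_eq hlam
    (continuous_quadraticMap q) hψ (hΦ.mul (hψ.isLocallyConstant.comp_continuous hℓ)) hΦc.mul_right
    ht
  obtain ⟨M, hM⟩ := Filter.eventually_atTop.1 hinversion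
  refine ⟨M, fun m hm => ?_⟩
  simp_rw [integral_pi_rpow_smul_eq_quadraticForm ψ q ℓ Φ ha, smul_mul_assoc]
  rw [integral_smul]
  exact congrArg _ (hM m hm)

end OrbitalIntegral

/-- computational core of Proposition 11.1 of the paper: with
`⟨u,v⟩ = q(u+v) - q(u) - q(v)`, `q(v₁) = 1`, `Φ` locally constant compactly supported and
`a ≠ 0`, the truncated oscillatory integrals
`I_m(a) = ∫_{‖b‖ ≤ pᵐ} (∫ |a|^{n/2} Φ(a·y) ψ(a²b·q(y)) ψ(⟨v₁,y⟩) dy) ψ(-b) db`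
are eventually constant, equal to `|a|^{-n/2} ∫ Φ(x) ψ(a⁻¹⟨v₁,x⟩) dμ₁(x)`. -/
theorem stmt8 (p : ℕ) [Fact p.Prime] [MeasurableSpace ℚ_[p]] [BorelSpace ℚ_[p]]
    (μF : Measure ℚ_[p]) [μF.IsAddHaarMeasure] [SigmaFinite μF]
    (hμF : μF {x : ℚ_[p] | ‖x‖ ≤ 1} = 1)
    (ψ : ℚ_[p] → ℂ) (hψc : Continuous ψ)
    (hψm : ∀ x y : ℚ_[p], ψ (x + y) = ψ x * ψ y)
    (hψtriv : ∀ x : ℚ_[p], ‖x‖ ≤ 1 → ψ x = 1)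
    (hψnt : ∃ x : ℚ_[p], ‖x‖ ≤ (p : ℝ) ∧ ψ x ≠ 1)
    (n : ℕ)
    (q : QuadraticForm ℚ_[p] (Fin n → ℚ_[p]))
    (hq : ∀ v : Fin n → ℚ_[p], (∀ w : Fin n → ℚ_[p], q (v + w) - q v - q w = 0) → v = 0)
    (μ : ℚ_[p] → Measure (Fin n → ℚ_[p]))
    (hreg : ∀ a : ℚ_[p], a ≠ 0 → (μ a).Regular)
    (hsupp : ∀ a : ℚ_[p], a ≠ 0 → μ a {v : Fin n → ℚ_[p] | q v ≠ a} = 0)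
    (hloc : ∀ f : (Fin n → ℚ_[p]) → ℂ, IsLocallyConstant f → HasCompactSupport f →
      (∀ v ∈ tsupport f, q v ≠ 0) →
      (∀ a : ℚ_[p], a ≠ 0 → ∀ᶠ a' in nhds a, (∫ v, f v ∂ μ a') = ∫ v, f v ∂ μ a) ∧
      ∃ K : Set ℚ_[p], IsCompact K ∧ (0 : ℚ_[p]) ∉ K ∧
        ∀ a : ℚ_[p], a ≠ 0 → a ∉ K → (∫ v, f v ∂ μ a) = 0)
    (hGL : ∀ f : (Fin n → ℚ_[p]) → ℂ, IsLocallyConstant f → HasCompactSupport f →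
      (∀ v ∈ tsupport f, q v ≠ 0) →
      (∫ v, f v ∂(Measure.pi fun _ : Fin n => μF))
        = ∫ a in {a : ℚ_[p] | a ≠ 0}, (∫ v, f v ∂ μ a) ∂ μF)
    (v₁ : Fin n → ℚ_[p]) (hv₁ : q v₁ = 1)
    (Φ : (Fin n → ℚ_[p]) → ℂ) (hΦ : IsLocallyConstant Φ) (hΦc : HasCompactSupport Φ)
    (a : ℚ_[p]) (ha : a ≠ 0) :
    ∃ M : ℕ, ∀ m : ℕ, M ≤ m →
      (∫ b in {b : ℚ_[p] | ‖b‖ ≤ (p : ℝ) ^ (m : ℤ)},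
        (∫ y, (‖a‖ ^ ((n : ℝ) / 2)) •
            (Φ (a • y) * ψ (a ^ 2 * b * q y) * ψ (q (v₁ + y) - q v₁ - q y))
          ∂(Measure.pi fun _ : Fin n => μF)) * ψ (-b) ∂ μF)
      = (‖a‖ ^ (-((n : ℝ) / 2))) •
          ∫ x, Φ x * ψ (a⁻¹ * (q (v₁ + x) - q v₁ - q x)) ∂ μ 1 := by
  have hball (r : ℝ) : {x : ℚ_[p] | ‖x‖ ≤ r} = Metric.closedBall 0 r := by ext; simp
  have hψ : IsUnramifiedAddChar ⟨ψ, hψtriv 0 (by simp), hψm⟩ := ⟨hψtriv, hψnt⟩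
  have hμ : IsGelfandLerayFamily q (Measure.pi fun _ => μF) μF μ :=
    ⟨hsupp, fun f hf => (hloc f hf.1 hf.2 hf.3).1, fun f hf => hGL f hf.1 hf.2 hf.3⟩
  simpa [hball, QuadraticMap.polar] using
    stmt8_general (hball 1 ▸ hμF) hψ hμ (q.polarBilin v₁) hΦ hΦc ha one_ne_zero
end
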